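/- For every integer k ≥ 2 and every harmonic homogeneous polynomial h of degree k−1, the n-tuple φ(h) = φ₁(h) + c·φ₂(h) is a homogeneous degree-k polynomial solution of the Navier equations, i.e. φ(H_{k−1}) ⊆ Ĥₖ. -/

import Mathlib

open MvPolynomial

/-- The Laplacian `Δ = ∑ᵣ ∂²_{xᵣ}` on `ℝ[x₁,…,xₙ]`. -/
noncomputable def lap {n : ℕ} (p : MvPolynomial (Fin n) ℝ) : MvPolynomial (Fin n) ℝ :=
  ∑ r : Fin n, pderiv r (pderiv r p)

/-- The Navier operator `N(u)ⱼ = Δuⱼ + b·∂_{xⱼ}(∑ᵣ ∂_{xᵣ} uᵣ)`. -/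
noncomputable def navier {n : ℕ} (b : ℝ) (u : Fin n → MvPolynomial (Fin n) ℝ) :
    Fin n → MvPolynomial (Fin n) ℝ :=
  fun j => lap (u j) + b • pderiv j (∑ r : Fin n, pderiv r (u r))

/-- `φ = φ₁ + c·φ₂` with
`φ₁(f) = (k−1)[(∑ᵣ xᵣ²)·ψ(f) − (2k+n−4)·f·(x₁,…,xₙ)]`,
`φ₂(f) = (∑ᵣ xᵣ²)·ψ(f)`, where `ψ` is the gradient map, and
`c = (2k+n−2)(k+n−3)(k−1) / (2(b⁻¹(2k+n−4)+k−1))`. -/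
noncomputable def phiMap {n : ℕ} (b : ℝ) (k : ℕ) (f : MvPolynomial (Fin n) ℝ) :
    Fin n → MvPolynomial (Fin n) ℝ :=
  fun j =>
    ((k : ℝ) - 1) • ((∑ r : Fin n, X r ^ 2) * pderiv j f
        - (2 * (k : ℝ) + n - 4) • (f * X j))
    + ((2 * (k : ℝ) + n - 2) * ((k : ℝ) + n - 3) * ((k : ℝ) - 1) /
          (2 * (b⁻¹ * (2 * (k : ℝ) + n - 4) + (k : ℝ) - 1))) •
        ((∑ r : Fin n, X r ^ 2) * pderiv j f)

/-!
Write `|x|²` for the power sum `psum σ R 2`. For `h` harmonic and homogeneous of degree `d + 1`, the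
Leibniz rule and Euler's identity give `Δ(|x|² ∇h) = (2n + 4d) ∇h`, `Δ(h x) = 2 ∇h`,
`div (|x|² ∇h) = 2(d + 1) h` and `div (h x) = (d + 1 + n) h`. Hence the Navier operator maps
`α |x|² ∇h + β h x` to a scalar multiple of `∇h`, the scalar being a linear form in `(α, β)`; the
constant `c` is exactly what makes it vanish on the coefficients of `φ(h)`.
-/

section VectorCalculus

variable {σ R : Type*} [CommSemiring R]

theorem pderiv_pderiv_comm (i j : σ) (p : MvPolynomial σ R) :
    pderiv i (pderiv j p) = pderiv j (pderiv i p) := by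
  classical
  ext m
  obtain rfl | hij := eq_or_ne i j
  · rfl
  · simp only [coeff_pderiv, Finsupp.add_apply, Finsupp.single_eq_of_ne hij,
      Finsupp.single_eq_of_ne hij.symm, add_zero]
    rw [add_right_comm, mul_right_comm]

/-- The gradient `∇f` of a polynomial, as a linear map. -/
noncomputable def grad : MvPolynomial σ R →ₗ[R] σ → MvPolynomial σ R :=
  LinearMap.pi fun i => (pderiv i).toLinearMap

theorem grad_apply (f : MvPolynomial σ R) (i : σ) : grad f i = pderiv i f := rfl

theorem grad_mul (f g : MvPolynomial σ R) : grad (f * g) = g • grad f + f • grad g := by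
  ext1 i
  simp only [grad_apply, pderiv_mul, Pi.add_apply, Pi.smul_apply, smul_eq_mul]
  ring

variable [Fintype σ]

/-- The divergence of a polynomial vector field, as a linear map. -/
noncomputable def divergence : (σ → MvPolynomial σ R) →ₗ[R] MvPolynomial σ R where
  toFun u := ∑ i, pderiv i (u i)
  map_add' u v := by simp [Finset.sum_add_distrib]
  map_smul' a u := by simp [Finset.smul_sum]

theorem divergence_apply (u : σ → MvPolynomial σ R) : divergence u = ∑ i, pderiv i (u i) := rfl

/-- The Laplacian over an arbitrary commutative semiring, as a linear map. -/
noncomputable def laplacian : MvPolynomial σ R →ₗ[R] MvPolynomial σ R :=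
  divergence ∘ₗ grad

theorem divergence_grad (f : MvPolynomial σ R) : divergence (grad f) = laplacian f := rfl

theorem laplacian_apply (f : MvPolynomial σ R) : laplacian f = ∑ i, pderiv i (pderiv i f) := rfl

theorem divergence_smul (f : MvPolynomial σ R) (u : σ → MvPolynomial σ R) :
    divergence (f • u) = grad f ⬝ᵥ u + f * divergence u := by
  simp only [divergence_apply, dotProduct, grad_apply, Pi.smul_apply, smul_eq_mul, pderiv_mul,
    Finset.sum_add_distrib, Finset.mul_sum]

theorem divergence_X : divergence (X : σ → MvPolynomial σ R) = Fintype.card σ := by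
  simp [divergence_apply]

theorem laplacian_mul (f g : MvPolynomial σ R) :
    laplacian (f * g) = laplacian f * g + 2 * (grad f ⬝ᵥ grad g) + f * laplacian g := by
  simp only [← divergence_grad, grad_mul, map_add, divergence_smul, dotProduct_comm (grad g)]
  ring

theorem laplacian_pderiv (i : σ) (f : MvPolynomial σ R) :
    laplacian (pderiv i f) = pderiv i (laplacian f) := by
  simp only [laplacian_apply, map_sum, pderiv_pderiv_comm i]

theorem laplacian_X (i : σ) : laplacian (X i : MvPolynomial σ R) = 0 := by
  classical
  simp [laplacian_apply, pderiv_X, Pi.single_apply, apply_ite]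

theorem laplacian_mul_X (f : MvPolynomial σ R) (i : σ) :
    laplacian (f * X i) = laplacian f * X i + 2 * pderiv i f := by
  classical
  have hgrad : grad f ⬝ᵥ grad (X i) = pderiv i f := by
    simp [dotProduct, grad_apply, pderiv_X, Pi.single_apply]
  rw [laplacian_mul, laplacian_X, hgrad, mul_zero, add_zero]

theorem X_dotProduct_grad {d : ℕ} {f : MvPolynomial σ R} (hf : f.IsHomogeneous d) :
    X ⬝ᵥ grad f = d * f := by
  rw [← nsmul_eq_mul, ← hf.sum_X_mul_pderiv]
  rfl

theorem divergence_smul_X {d : ℕ} {f : MvPolynomial σ R} (hf : f.IsHomogeneous d) :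
    divergence (f • X : σ → MvPolynomial σ R) = (d + Fintype.card σ) * f := by
  rw [divergence_smul, divergence_X, dotProduct_comm, X_dotProduct_grad hf]
  ring

theorem isHomogeneous_psum (m : ℕ) : (psum σ R m).IsHomogeneous m :=
  IsHomogeneous.sum _ _ _ fun i _ => isHomogeneous_X_pow i m

theorem grad_psum_two : grad (psum σ R 2) = 2 • X := by
  classical
  ext1 i
  simp [grad_apply, psum, pderiv_X, Pi.single_apply]

theorem laplacian_psum_two : laplacian (psum σ R 2) = 2 * Fintype.card σ := by
  rw [← divergence_grad, grad_psum_two, map_nsmul, divergence_X, nsmul_eq_mul, Nat.cast_ofNat]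

theorem laplacian_psum_two_mul {d : ℕ} {f : MvPolynomial σ R} (hf : f.IsHomogeneous d) :
    laplacian (psum σ R 2 * f) = (2 * Fintype.card σ + 4 * d) * f + psum σ R 2 * laplacian f := by
  rw [laplacian_mul, laplacian_psum_two, grad_psum_two, smul_dotProduct,
    X_dotProduct_grad hf, nsmul_eq_mul]
  ring

theorem divergence_psum_two_smul_grad {d : ℕ} {f : MvPolynomial σ R} (hf : f.IsHomogeneous d) :
    divergence (psum σ R 2 • grad f) = 2 * d * f + psum σ R 2 * laplacian f := by
  rw [divergence_smul, grad_psum_two, smul_dotProduct, X_dotProduct_grad hf,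
    divergence_grad, nsmul_eq_mul, Nat.cast_ofNat, mul_assoc]

end VectorCalculus

section Navier

variable {σ R : Type*} [Fintype σ] [CommSemiring R]

/-- The Navier operator `u ↦ Δu + b ∇(div u)`, over an arbitrary commutative semiring. -/
noncomputable def navierOperator (b : R) :
    (σ → MvPolynomial σ R) →ₗ[R] σ → MvPolynomial σ R :=
  laplacian.compLeft σ + b • grad ∘ₗ divergence

theorem navierOperator_apply (b : R) (u : σ → MvPolynomial σ R) (j : σ) :
    navierOperator b u j = laplacian (u j) + b • pderiv j (divergence u) := rfl

theorem navierOperator_psum_two_smul_grad (b : R) {d : ℕ} {h : MvPolynomial σ R}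
    (hh : h.IsHomogeneous (d + 1)) (hharm : laplacian h = 0) :
    navierOperator b (psum σ R 2 • grad h) =
      (2 * (Fintype.card σ + 2 * d + b * (d + 1)) : R) • grad h := by
  ext1 j
  have hlap : laplacian (psum σ R 2 * pderiv j h) = (2 * Fintype.card σ + 4 * d) * pderiv j h := by
    rw [laplacian_psum_two_mul hh.pderiv, laplacian_pderiv, hharm, map_zero, mul_zero, add_zero,
      Nat.add_sub_cancel]
  have hdiv : divergence (psum σ R 2 • grad h) = (2 * (d + 1) : R) • h := by
    rw [divergence_psum_two_smul_grad hh, hharm, mul_zero, add_zero]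
    simp [smul_eq_C_mul, map_ofNat C]
  rw [navierOperator_apply, hdiv, Pi.smul_apply, smul_eq_mul, grad_apply, hlap,
    Derivation.map_smul, Pi.smul_apply, grad_apply]
  simp only [smul_eq_C_mul, map_mul, map_add, map_ofNat, map_natCast, map_one]
  ring

theorem navierOperator_smul_X (b : R) {d : ℕ} {h : MvPolynomial σ R}
    (hh : h.IsHomogeneous d) (hharm : laplacian h = 0) :
    navierOperator b (h • X) = (2 + b * (d + Fintype.card σ) : R) • grad h := by
  ext1 j
  have hdiv : divergence (h • X) = (d + Fintype.card σ : R) • h := by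
    rw [divergence_smul_X hh]
    simp [smul_eq_C_mul]
  rw [navierOperator_apply, hdiv, Pi.smul_apply, smul_eq_mul, laplacian_mul_X, hharm, zero_mul,
    zero_add, Derivation.map_smul, Pi.smul_apply, grad_apply]
  simp only [smul_eq_C_mul, map_mul, map_add, map_ofNat, map_natCast]
  ring

end Navier

section Phi

variable {σ K : Type*} [Fintype σ] [Field K]

/-- The constant `c` in `φ = φ₁ + c·φ₂` over an arbitrary field; the dimension `n` is taken as a
field element. -/
def phiConst (n b : K) (k : ℕ) : K :=
  (2 * k + n - 2) * (k + n - 3) * (k - 1) / (2 * (b⁻¹ * (2 * k + n - 4) + k - 1))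

/-- The map `φ` over an arbitrary field, for polynomials in variables indexed by `σ`. -/
noncomputable def phi (b : K) (k : ℕ) (f : MvPolynomial σ K) : σ → MvPolynomial σ K :=
  (k - 1 : K) • (psum σ K 2 • grad f - (2 * k + Fintype.card σ - 4 : K) • f • X) +
    phiConst (Fintype.card σ : K) b k • psum σ K 2 • grad f

theorem isHomogeneous_phi (b : K) {d : ℕ} {h : MvPolynomial σ K}
    (hh : h.IsHomogeneous (d + 1)) (j : σ) : (phi b (d + 2) h j).IsHomogeneous (d + 2) := by
  have hrad : psum σ K 2 * pderiv j h ∈ homogeneousSubmodule σ K (d + 2) :=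
    add_comm 2 d ▸ (isHomogeneous_psum 2).mul hh.pderiv
  have hpos : h * X j ∈ homogeneousSubmodule σ K (d + 2) := hh.mul (isHomogeneous_X K j)
  exact add_mem (Submodule.smul_mem _ _ (sub_mem hrad (Submodule.smul_mem _ _ hpos)))
    (Submodule.smul_mem _ _ hrad)

theorem phiConst_mul {n b : K} {k : ℕ} (hb : b ≠ 0)
    (hden : 2 * (b⁻¹ * (2 * k + n - 4) + k - 1) ≠ 0) :
    phiConst n b k * (2 * (2 * k + n - 4 + b * (k - 1))) =
      b * ((2 * k + n - 2) * (k + n - 3) * (k - 1)) := by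
  have hfactor : 2 * (2 * k + n - 4 + b * (k - 1)) =
      b * (2 * (b⁻¹ * (2 * k + n - 4) + k - 1)) := by
    field_simp
    ring
  rw [hfactor, mul_left_comm, phiConst, div_mul_cancel₀ _ hden]

theorem navierOperator_phi {b : K} {d : ℕ} {h : MvPolynomial σ K} (hb : b ≠ 0)
    (hden : 2 * (b⁻¹ * (2 * (d + 2 : ℕ) + Fintype.card σ - 4) + (d + 2 : ℕ) - 1) ≠ 0)
    (hh : h.IsHomogeneous (d + 1)) (hharm : laplacian h = 0) :
    navierOperator b (phi b (d + 2) h) = 0 := by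
  have hc := phiConst_mul hb hden
  simp only [phi, map_add, map_sub, map_smul, navierOperator_psum_two_smul_grad b hh hharm,
    navierOperator_smul_X b hh hharm]
  match_scalars
  push_cast at hc ⊢
  -- With `k = d + 2`: `(2k + n - 4)(k + n - 1) - 2(k - 1) = (2k + n - 2)(k + n - 3)`.
  linear_combination hc

theorem phi_mem_Hhat_general {b : K} {k : ℕ} {h : MvPolynomial σ K} (hb : b ≠ 0) (hk : 2 ≤ k)
    (hden : 2 * (b⁻¹ * (2 * k + Fintype.card σ - 4) + k - 1) ≠ 0)
    (hh : h.IsHomogeneous (k - 1)) (hharm : laplacian h = 0) :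
    (∀ j, (phi b k h j).IsHomogeneous k) ∧ navierOperator b (phi b k h) = 0 := by
  obtain ⟨d, rfl⟩ := Nat.exists_eq_add_of_le' hk
  exact ⟨isHomogeneous_phi b hh, navierOperator_phi hb hden hh hharm⟩

end Phi

section Denominator

variable {K : Type*} [Field K] [LinearOrder K] [IsStrictOrderedRing K]

theorem inv_mul_add_ne_zero {b x y : K} (hb : b ≠ 0) (hb1 : 0 < b + 1) (hy : 0 < y)
    (hyx : y ≤ x) : b⁻¹ * x + y ≠ 0 := by
  have hpos : 0 < b * (b⁻¹ * x + y) :=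
    calc
      0 < (b + 1) * y := mul_pos hb1 hy
      _ ≤ x + b * y := by linarith
      _ = b * (b⁻¹ * x + y) := by rw [mul_add, mul_inv_cancel_left₀ hb]
  exact right_ne_zero_of_mul hpos.ne'

theorem phiConst_denom_ne_zero {n k : ℕ} {b : K} (hn : 3 ≤ n) (hb : b ≠ 0) (hb1 : 0 < b + 1)
    (hk : 2 ≤ k) : 2 * (b⁻¹ * (2 * k + n - 4) + k - 1) ≠ 0 := by
  have hn' : (3 : K) ≤ n := by exact_mod_cast hn
  have hk' : (2 : K) ≤ k := by exact_mod_cast hk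
  rw [add_sub_assoc]
  exact mul_ne_zero two_ne_zero (inv_mul_add_ne_zero hb hb1 (by linarith) (by linarith))

end Denominator

theorem lap_eq_laplacian {n : ℕ} (p : MvPolynomial (Fin n) ℝ) : lap p = laplacian p := rfl

theorem navier_eq_navierOperator {n : ℕ} (b : ℝ) (u : Fin n → MvPolynomial (Fin n) ℝ) :
    navier b u = navierOperator b u := rfl

theorem phiMap_eq_phi {n : ℕ} (b : ℝ) (k : ℕ) (f : MvPolynomial (Fin n) ℝ) :
    phiMap b k f = phi b k f := by
  simp only [phi, Fintype.card_fin]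
  rfl

/-- for `k ≥ 2` and every harmonic homogeneous polynomial `h` of degree
`k−1`, `φ(h)` is a homogeneous degree-`k` polynomial solution of the Navier equations,
i.e. `φ(H_{k−1}) ⊆ Ĥₖ`. -/
theorem phi_mem_Hhat (n : ℕ) (hn : 3 ≤ n) (b : ℝ) (hb : b ≠ 0) (hb1 : 0 < b + 1)
    (k : ℕ) (hk : 2 ≤ k) (h : MvPolynomial (Fin n) ℝ)
    (hh : h.IsHomogeneous (k - 1)) (hharm : lap h = 0) :
    (∀ j, (phiMap b k h j).IsHomogeneous k) ∧ navier b (phiMap b k h) = 0 := by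
  rw [navier_eq_navierOperator, phiMap_eq_phi]
  exact phi_mem_Hhat_general hb hk (by simpa using phiConst_denom_ne_zero hn hb hb1 hk) hh
    (lap_eq_laplacian h ▸ hharm)
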